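/- arXiv:math/0608591 — 2 statements merged into one kernel-verified Lean document; each statement's English description precedes it below -/
import Mathlib

section
/- Let 𝒜 be a nonempty indecomposable real central arrangement of hyperplanes in ℝ^ℓ with |𝒜| ≥ 3, and let m be a positive integer. Then every admissible map Φ : Ch^m → Ch is projective, i.e., Φ is the projection onto the h-th component for some h ∈ {1,…,m}. -/
noncomputable section
attribute [local instance] Classical.propDecidable

/-- A (nonempty if `ι` is nonempty) real central arrangement of hyperplanes in `ℝ^ℓ`,
given by a family of nonzero defining linear forms with pairwise distinct kernels
(the hyperplanes `H j = ker (form j)`). -/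
structure Arrangement (ℓ : ℕ) (ι : Type) [Fintype ι] where
  form : ι → ((Fin ℓ → ℝ) →ₗ[ℝ] ℝ)
  form_ne_zero : ∀ j, form j ≠ 0
  ker_injective : ∀ j k, LinearMap.ker (form j) = LinearMap.ker (form k) → j = k

namespace Arrangement

variable {ℓ : ℕ} {ι : Type} [Fintype ι]

/-- The complement `ℝ^ℓ ∖ (H₁ ∪ ⋯ ∪ Hₙ)`. -/
def Complement (A : Arrangement ℓ ι) : Set (Fin ℓ → ℝ) :=
  {x | ∀ j, A.form j x ≠ 0}

/-- A chamber is a connected component of the complement. -/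
def IsChamber (A : Arrangement ℓ ι) (C : Set (Fin ℓ → ℝ)) : Prop :=
  ∃ x ∈ A.Complement, C = connectedComponentIn A.Complement x

/-- The set (type) of chambers of the arrangement. -/
abbrev Ch (A : Arrangement ℓ ι) : Type := {C : Set (Fin ℓ → ℝ) // A.IsChamber C}

/-- `εⱼ^σ(C) = στ` when `C ⊆ Hⱼ^τ`; `B = {+,-}` is realized as `ℤˣ`, `+ = 1`, `- = -1`. -/
def eps (A : Arrangement ℓ ι) (j : ι) (σ : ℤˣ) (C : A.Ch) : ℤˣ :=
  σ * (if ∀ x ∈ C.1, 0 < A.form j x then 1 else -1)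

/-- `Φ : Ch^m → Ch` is admissible if there is a family `φⱼ^σ : B^m → B` with
`φⱼ^σ(+,…,+) = +` and `εⱼ^σ ∘ Φ = φⱼ^σ ∘ εⱼ^σ` (componentwise) for all `j, σ`. -/
def IsAdmissible (A : Arrangement ℓ ι) (m : ℕ) (Φ : (Fin m → A.Ch) → A.Ch) : Prop :=
  ∃ φ : ι → ℤˣ → ((Fin m → ℤˣ) → ℤˣ),
    (∀ j σ, φ j σ (fun _ => 1) = 1) ∧
    ∀ j σ 𝒞, A.eps j σ (Φ 𝒞) = φ j σ (fun i => A.eps j σ (𝒞 i))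

/-- `r(ℬ) = codim (⋂_{H ∈ ℬ} H)` for the subarrangement indexed by `S`. -/
def rnkOn (A : Arrangement ℓ ι) (S : Finset ι) : ℕ :=
  ℓ - Module.finrank ℝ ↥(⨅ j ∈ S, LinearMap.ker (A.form j))

/-- `r(𝒜)`. -/
def rnk (A : Arrangement ℓ ι) : ℕ := A.rnkOn Finset.univ

/-- The subarrangement indexed by `S` decomposes as a disjoint union of two nonempty
subarrangements with additive rank. -/
def DecomposableOn (A : Arrangement ℓ ι) (S : Finset ι) : Prop :=
  ∃ S₁ S₂ : Finset ι, S₁.Nonempty ∧ S₂.Nonempty ∧ Disjoint S₁ S₂ ∧ S₁ ∪ S₂ = S ∧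
    A.rnkOn S = A.rnkOn S₁ + A.rnkOn S₂

def IndecomposableOn (A : Arrangement ℓ ι) (S : Finset ι) : Prop := ¬ A.DecomposableOn S

def Decomposable (A : Arrangement ℓ ι) : Prop := A.DecomposableOn Finset.univ

def Indecomposable (A : Arrangement ℓ ι) : Prop := ¬ A.Decomposable

/-- The subarrangement of `A` consisting of the hyperplanes indexed by `S`. -/
def restrict (A : Arrangement ℓ ι) (S : Finset ι) : Arrangement ℓ {j : ι // j ∈ S} where
  form := fun j => A.form j.1
  form_ne_zero := fun j => A.form_ne_zero j.1
  ker_injective := fun j k h => Subtype.ext (A.ker_injective j.1 k.1 h)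

/-- A dependent subarrangement: `r(ℬ) < |ℬ|`. -/
def DependentOn (A : Arrangement ℓ ι) (S : Finset ι) : Prop := A.rnkOn S < S.card

/-- A circuit: a minimally dependent subarrangement. -/
def IsCircuitOn (A : Arrangement ℓ ι) (S : Finset ι) : Prop :=
  A.DependentOn S ∧ ∀ T ⊂ S, ¬ A.DependentOn T

end Arrangement

/-!
A chamber is determined by its signs on the hyperplanes, so an admissible map is a family of
voting rules `g j : {±1}^m → {±1}`, one for each hyperplane, which respect unanimity and send
realizable sign vectors to realizable ones.

On a circuit, i.e. a relation `∑ cᵢ αᵢ = 0` of minimal support, the sign vectors realized by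
chambers are exactly those for which `cᵢ sᵢ` takes both signs. After twisting by the signs of `c`
this is the situation of Arrow's theorem: nonconstant ballots must have a nonconstant outcome.
As a circuit has at least three elements, all the twisted rules agree and their winning coalitions
form an ultrafilter on the finite set of voters, so there is a dictator.

Relations of minimal support span all relations. Hence if no circuit met both parts of a
bipartition of the arrangement, the two parts would span independent subspaces and the arrangement
would be decomposable. Dictators therefore propagate from circuit to circuit.
-/

open Function Set Submodule

/-! ### Arrow's theorem for two-valued ballots -/

/-- Voting rules `f i`, one for each issue `i : κ`, by which the voters `p : N` decide every issue
as `1` or `-1`. The family is *Arrovian* if it respects unanimity and if the outcome takes both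
values whenever the ballot `fun i => X i p` of every voter `p` does. -/
structure IsArrovian {κ N : Type*} (f : κ → (N → ℤˣ) → ℤˣ) : Prop where
  map_const : ∀ i τ, f i (fun _ => τ) = τ
  surjective : ∀ X : κ → N → ℤˣ, (∀ p, Surjective fun i => X i p) → Surjective fun i => f i (X i)

namespace IsArrovian

variable {κ N : Type*} {f : κ → (N → ℤˣ) → ℤˣ}

lemma apply_eq_or_apply_eq_or_exists_apply_eq (hf : IsArrovian f)
    (h3 : ∀ i j : κ, ∃ k, k ≠ i ∧ k ≠ j) {i j : κ} (hij : i ≠ j) {x y z : N → ℤˣ}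
    (hxyz : ∀ p τ, x p = τ ∨ y p = τ ∨ z p = τ) (τ : ℤˣ) :
    f i x = τ ∨ f j y = τ ∨ ∃ k, f k z = τ := by
  let X : κ → N → ℤˣ := update (update (fun _ => z) j y) i x
  have hXi : X i = x := update_self ..
  have hXj : X j = y := by simp [X, hij.symm]
  have hXk (k : κ) (hki : k ≠ i) (hkj : k ≠ j) : X k = z := by simp [X, hki, hkj]
  have hX (p : N) : Surjective fun k => X k p := fun σ => by
    obtain ⟨k, hki, hkj⟩ := h3 i j
    rcases hxyz p σ with h | h | h
    exacts [⟨i, (congrFun hXi p).trans h⟩, ⟨j, (congrFun hXj p).trans h⟩,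
      ⟨k, (congrFun (hXk k hki hkj) p).trans h⟩]
  obtain ⟨k, hk : f k (X k) = τ⟩ := hf.surjective X hX τ
  rcases eq_or_ne k i with rfl | hki
  · exact .inl (by rwa [hXi] at hk)
  rcases eq_or_ne k j with rfl | hkj
  · exact .inr (.inl (by rwa [hXj] at hk))
  · exact .inr (.inr ⟨k, by rwa [hXk k hki hkj] at hk⟩)

lemma map_neg_of_ne (hf : IsArrovian f) (h3 : ∀ i j : κ, ∃ k, k ≠ i ∧ k ≠ j) {i j : κ}
    (hij : i ≠ j) (x : N → ℤˣ) : f j (-x) = -f i x := by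
  have hx (p : N) (τ : ℤˣ) : x p = τ ∨ (-x) p = τ ∨ f i x = τ := by
    rcases eq_or_ne (x p) τ with h | h
    · exact .inl h
    · exact .inr (.inl (by rw [Pi.neg_apply, Int.units_ne_iff_eq_neg.1 h, neg_neg]))
  rcases hf.apply_eq_or_apply_eq_or_exists_apply_eq h3 hij hx (-f i x) with h | h | ⟨k, h⟩
  · exact absurd h (units_ne_neg_self _)
  · exact h
  · rw [hf.map_const] at h
    exact absurd h (units_ne_neg_self _)

lemma apply_eq_apply (hf : IsArrovian f) (h3 : ∀ i j : κ, ∃ k, k ≠ i ∧ k ≠ j) (i j : κ) :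
    f i = f j := by
  obtain ⟨k, hki, hkj⟩ := h3 i j
  ext1 x
  rw [← neg_inj, ← hf.map_neg_of_ne h3 hki.symm, hf.map_neg_of_ne h3 hkj.symm]

lemma map_neg (hf : IsArrovian f) (h3 : ∀ i j : κ, ∃ k, k ≠ i ∧ k ≠ j) (i : κ) (x : N → ℤˣ) :
    f i (-x) = -f i x := by
  obtain ⟨k, hki, -⟩ := h3 i i
  rw [hf.apply_eq_apply h3 i k, hf.map_neg_of_ne h3 hki.symm, hf.apply_eq_apply h3 i k]

/-- The ballots on a single issue on which exactly the coalition `S` votes `1`. -/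
def ballot (S : Set N) : N → ℤˣ := S.piecewise 1 (-1)

lemma ballot_univ : ballot (univ : Set N) = fun _ => 1 := by
  ext1 p
  simp [ballot]

lemma ballot_empty : ballot (∅ : Set N) = fun _ => -1 := by
  ext1 p
  simp [ballot]

lemma ballot_compl (S : Set N) : ballot Sᶜ = -ballot S := by
  ext1 p
  by_cases hp : p ∈ S <;> simp [ballot, hp]

lemma ballot_setOf_eq_one (x : N → ℤˣ) : ballot {p | x p = 1} = x := by
  ext1 p
  rcases Int.units_eq_one_or (x p) with hp | hp <;> simp [ballot, Set.piecewise, hp]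

lemma map_ballot_inter (hf : IsArrovian f) (h3 : ∀ i j : κ, ∃ k, k ≠ i ∧ k ≠ j) {i : κ}
    {S T : Set N} (hS : f i (ballot S) = 1) (hT : f i (ballot T) = 1) :
    f i (ballot (S ∩ T)) = 1 := by
  obtain ⟨j, hji, -⟩ := h3 i i
  have hST (p : N) (τ : ℤˣ) :
      ballot S p = τ ∨ ballot T p = τ ∨ ballot (S ∩ T)ᶜ p = τ := by
    rcases Int.units_eq_one_or τ with rfl | rfl <;>
    by_cases hpS : p ∈ S <;> by_cases hpT : p ∈ T <;> simp [ballot, hpS, hpT]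
  rcases hf.apply_eq_or_apply_eq_or_exists_apply_eq h3 hji.symm hST (-1) with h | h | ⟨k, h⟩
  · rw [hS] at h
    exact absurd h (units_ne_neg_self 1)
  · rw [hf.apply_eq_apply h3 j i, hT] at h
    exact absurd h (units_ne_neg_self 1)
  · rwa [hf.apply_eq_apply h3 k i, ballot_compl, hf.map_neg h3, neg_inj] at h

lemma map_ballot_mono (hf : IsArrovian f) (h3 : ∀ i j : κ, ∃ k, k ≠ i ∧ k ≠ j) {i : κ}
    {S T : Set N} (hST : S ⊆ T) (hS : f i (ballot S) = 1) : f i (ballot T) = 1 := by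
  by_contra hT
  have hTc : f i (ballot Tᶜ) = 1 := by
    rw [ballot_compl, hf.map_neg h3, Int.units_ne_iff_eq_neg.1 hT, neg_neg]
  have hempty := hf.map_ballot_inter h3 hS hTc
  rw [(disjoint_compl_right_iff_subset.2 hST).inter_eq, ballot_empty, hf.map_const] at hempty
  exact units_ne_neg_self 1 hempty.symm

lemma exists_ultrafilter (hf : IsArrovian f) (h3 : ∀ i j : κ, ∃ k, k ≠ i ∧ k ≠ j) (i : κ) :
    ∃ U : Ultrafilter N, ∀ S, S ∈ U ↔ f i (ballot S) = 1 := by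
  let F : Filter N :=
    { sets := {S | f i (ballot S) = 1}
      univ_sets := by rw [mem_ofPred_eq, ballot_univ, hf.map_const]
      sets_of_superset := fun hS hST => hf.map_ballot_mono h3 hST hS
      inter_sets := hf.map_ballot_inter h3 }
  have hF (S : Set N) : S ∈ F ↔ f i (ballot S) = 1 := Iff.rfl
  refine ⟨.ofComplNotMemIff F fun S => ?_, hF⟩
  rw [hF, hF, ballot_compl, hf.map_neg h3, ← ne_eq, Int.units_ne_iff_eq_neg, neg_inj]

/-- Arrow's theorem: the decisive coalitions form an ultrafilter, which is principal. -/
theorem exists_dictator [Finite N] [Nonempty κ] (hf : IsArrovian f)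
    (h3 : ∀ i j : κ, ∃ k, k ≠ i ∧ k ≠ j) : ∃ h, ∀ i x, f i x = x h := by
  obtain ⟨i₀⟩ := ‹Nonempty κ›
  obtain ⟨U, hU⟩ := hf.exists_ultrafilter h3 i₀
  obtain ⟨h, rfl⟩ := U.eq_pure_of_finite
  have key (x : N → ℤˣ) : f i₀ x = 1 ↔ x h = 1 := by
    rw [← ballot_setOf_eq_one x, ← hU, Ultrafilter.mem_pure, ballot_setOf_eq_one, mem_ofPred_eq]
  refine ⟨h, fun i x => ?_⟩
  rw [hf.apply_eq_apply h3 i i₀]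
  rcases Int.units_eq_one_or (x h) with hx | hx
  · rw [hx, key, hx]
  · rw [hx, ← Int.units_ne_iff_eq_neg, ne_eq, key, hx]
    exact (units_ne_neg_self 1).symm

end IsArrovian

/-! ### Elementary vectors and linear relations -/

section Semiring

variable {K V ι : Type*} [Semiring K]

/-- A nonzero vector of the subspace `R` of `ι → K` whose support is minimal (Rockafellar). When
`R` consists of the linear relations of a family of vectors, the supports of the elementary vectors
are the circuits of the family. -/
def IsElementaryVector (R : Submodule K (ι → K)) (c : ι → K) : Prop :=
  MinimalFor (fun d => d ∈ R ∧ d ≠ 0) support c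

lemma IsElementaryVector.eq_zero_of_support_ssubset {R : Submodule K (ι → K)} {c d : ι → K}
    (hc : IsElementaryVector R c) (hd : d ∈ R) (hdc : support d ⊂ support c) : d = 0 := by
  by_contra hd0
  exact hdc.not_subset (hc.2 ⟨hd, hd0⟩ hdc.subset)

lemma IsElementaryVector.nonempty_support {R : Submodule K (ι → K)} {c : ι → K}
    (hc : IsElementaryVector R c) : Nonempty (support c) :=
  (support_nonempty_iff.2 hc.1.2).to_subtype

variable [Fintype ι]

lemma sum_support_mul (c y : ι → K) : ∑ i : support c, c i * y i = ∑ i, c i * y i := by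
  have hzero : ∑ i : {i // i ∉ support c}, c i * y i = 0 :=
    Finset.sum_eq_zero fun i _ => by rw [notMem_support.1 i.2, zero_mul]
  rw [← Fintype.sum_subtype_add_sum_subtype (· ∈ support c), hzero, add_zero]

variable [AddCommMonoid V] [Module K V]

/-- The space of coefficient vectors of the linear relations satisfied by the family `v`. -/
def linearRelations (v : ι → V) : Submodule K (ι → K) :=
  LinearMap.ker (Fintype.linearCombination K v)

lemma mem_linearRelations {v : ι → V} {c : ι → K} :
    c ∈ linearRelations v ↔ ∑ i, c i • v i = 0 := Iff.rfl

end Semiring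

section DivisionRing

variable {K V ι : Type*} [DivisionRing K]

lemma support_sub_div_smul_ssubset {c d : ι → K} (hdc : support d ⊆ support c) {i : ι}
    (hi : d i ≠ 0) : support (c - (c i / d i) • d) ⊂ support c := by
  refine ssubset_of_subset_of_ssubset (b := support c \ {i}) (fun k hk => ⟨fun hck => hk ?_, ?_⟩)
    (sdiff_singleton_ssubset.2 (hdc hi))
  · simp [hck, notMem_support.1 (notMem_subset hdc (notMem_support.2 hck))]
  · rintro rfl
    exact hk (by simp [div_mul_cancel₀ _ hi])

lemma IsElementaryVector.exists_eq_smul {R : Submodule K (ι → K)} {c d : ι → K}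
    (hc : IsElementaryVector R c) (hd : d ∈ R) (hdc : support d ⊆ support c) :
    ∃ t : K, d = t • c := by
  rcases eq_or_ne d 0 with rfl | hd0
  · exact ⟨0, by simp⟩
  obtain ⟨i, hi⟩ := Function.ne_iff.1 hd0
  have hsub : c - (c i / d i) • d = 0 := hc.eq_zero_of_support_ssubset
    (R.sub_mem hc.1.1 (R.smul_mem _ hd)) (support_sub_div_smul_ssubset hdc hi)
  have hci : c i / d i ≠ 0 := div_ne_zero (hdc hi) hi
  exact ⟨(c i / d i)⁻¹, (inv_smul_eq_iff₀ hci).2 (sub_eq_zero.1 hsub) |>.symm⟩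

theorem span_isElementaryVector [Finite ι] (R : Submodule K (ι → K)) :
    span K {c | IsElementaryVector R c} = R := by
  refine le_antisymm (span_le.2 fun c hc => hc.1.1) ?_
  by_contra hR
  obtain ⟨c, ⟨hcR, hc⟩, hmin⟩ := exists_minimalFor_of_wellFoundedLT
    (fun c => c ∈ R ∧ c ∉ span K {c | IsElementaryVector R c}) support
    (SetLike.not_le_iff_exists.1 hR)
  have hlt (d : ι → K) (hd : d ∈ R) (hdc : support d ⊂ support c) :
      d ∈ span K {c | IsElementaryVector R c} := by
    by_contra hd'
    exact hdc.not_subset (hmin ⟨hd, hd'⟩ hdc.subset)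
  refine hc (subset_span ⟨⟨hcR, fun h => hc (h ▸ zero_mem _)⟩, fun d hd hdc => ?_⟩)
  by_contra hcd
  obtain ⟨i, hi⟩ := Function.ne_iff.1 hd.2
  have hdspan := hlt d hd.1 ⟨hdc, hcd⟩
  have hsub := hlt _ (R.sub_mem hcR (R.smul_mem _ hd.1)) (support_sub_div_smul_ssubset hdc hi)
  exact hc (by simpa using add_mem hsub (smul_mem _ (c i / d i) hdspan))

variable [Fintype ι] [AddCommGroup V] [Module K V]

lemma exists_isElementaryVector_of_not_disjoint_span {v : ι → V} {S : Finset ι}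
    (h : ¬Disjoint (span K (v '' S)) (span K (v '' (Sᶜ : Finset ι)))) :
    ∃ c, IsElementaryVector (linearRelations (K := K) v) c ∧
      (∃ i ∈ S, c i ≠ 0) ∧ ∃ i ∉ S, c i ≠ 0 := by
  by_contra! hno
  refine h (disjoint_def.2 fun β hβS hβS' => ?_)
  -- No circuit is split by `S`, so cutting an elementary vector down to `S` leaves a relation. As
  -- elementary vectors span all relations, the same holds for every relation.
  let P : Submodule K (ι → K) := linearRelations ((S : Set ι).indicator v)
  have hP {c : ι → K} : c ∈ P ↔ ∑ i ∈ S, c i • v i = 0 := by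
    simp [P, mem_linearRelations, indicator_apply]
  have hRP : linearRelations v ≤ P := by
    rw [← span_isElementaryVector (linearRelations v), span_le]
    intro c hc
    by_cases hS : ∃ i ∈ S, c i ≠ 0
    · rw [SetLike.mem_coe, hP, ← mem_linearRelations.1 hc.1.1]
      exact Finset.sum_subset S.subset_univ fun i _ hi => by rw [hno c hc hS i hi, zero_smul]
    · push Not at hS
      exact hP.2 (Finset.sum_eq_zero fun i hi => by rw [hS i hi, zero_smul])
  obtain ⟨a, rfl⟩ := (mem_span_image_finset_iff_exists_fun' K).1 hβS
  obtain ⟨b, hb⟩ := (mem_span_image_finset_iff_exists_fun' K).1 hβS'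
  have hsumS : ∑ i ∈ S, S.piecewise a (-b) i • v i = ∑ i ∈ S, a i • v i :=
    Finset.sum_congr rfl fun i hi => by rw [Finset.piecewise_eq_of_mem _ _ _ hi]
  have hsumS' : ∑ i ∈ Sᶜ, S.piecewise a (-b) i • v i = -∑ i ∈ Sᶜ, b i • v i := by
    rw [← Finset.sum_neg_distrib]
    refine Finset.sum_congr rfl fun i hi => ?_
    rw [Finset.piecewise_eq_of_notMem _ _ _ (Finset.mem_compl.1 hi), Pi.neg_apply, neg_smul]
  rw [← hsumS, ← hP]
  apply hRP
  rw [mem_linearRelations, ← Finset.sum_add_sum_compl S, hsumS, hsumS', hb, add_neg_cancel]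

end DivisionRing

lemma IsElementaryVector.exists_forall_apply_eq {K V ι : Type*} [Field K] [Fintype ι]
    [AddCommGroup V] [Module K V] {φ : ι → Module.Dual K V} {c : ι → K}
    (hc : IsElementaryVector (linearRelations φ) c) {y : ι → K} (hy : ∑ i, c i * y i = 0) :
    ∃ x, ∀ i, c i ≠ 0 → φ i x = y i := by
  let L : V →ₗ[K] ι → K := LinearMap.pi fun i => c i • φ i
  suffices c * y ∈ LinearMap.range L by
    obtain ⟨x, hx⟩ := this
    exact ⟨x, fun i hi => mul_left_cancel₀ hi (congrFun hx i)⟩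
  by_contra hmem
  -- A functional `g` separating `c * y` from the range of `L` would make `g * c` a relation
  -- supported on the circuit, hence a multiple of `c`; but `c` annihilates `y`.
  obtain ⟨f, hfy, hf⟩ := exists_le_ker_of_notMem hmem
  obtain ⟨g, rfl⟩ := (dotProductEquiv K ι).surjective f
  have hg : g * c ∈ linearRelations φ := by
    rw [mem_linearRelations]
    ext x
    simpa [L, dotProduct, mul_assoc] using hf ⟨x, rfl⟩
  obtain ⟨t, ht⟩ := hc.exists_eq_smul hg (support_mul_subset_right g c)
  refine hfy ?_
  calc g ⬝ᵥ (c * y) = (g * c) ⬝ᵥ y := by simp only [dotProduct, Pi.mul_apply, mul_assoc]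
    _ = t • (c ⬝ᵥ y) := by rw [ht, smul_dotProduct]
    _ = 0 := by rw [dotProduct, hy, smul_zero]

/-! ### Signs -/

section UnitSign

variable {K κ : Type*}

/-- The sign of `r` as a unit of `ℤ`, encoding the side of a hyperplane on which a point lies. The
value at `0` is `-1`, but only nonzero `r` matter. -/
def unitSign [Zero K] [Preorder K] (r : K) : ℤˣ := if 0 < r then 1 else -1

lemma unitSign_eq_one_iff [Zero K] [Preorder K] {r : K} : unitSign r = 1 ↔ 0 < r := by
  by_cases hr : 0 < r <;> simp [unitSign, hr]

lemma unitSign_of_pos [Zero K] [Preorder K] {r : K} (hr : 0 < r) : unitSign r = 1 := if_pos hr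

lemma unitSign_of_neg [Zero K] [Preorder K] {r : K} (hr : r < 0) : unitSign r = -1 :=
  if_neg hr.not_gt

variable [Ring K] [LinearOrder K] [IsStrictOrderedRing K]

lemma unitSign_mul {r t : K} (hr : r ≠ 0) (ht : t ≠ 0) :
    unitSign (r * t) = unitSign r * unitSign t := by
  rcases hr.lt_or_gt with hr | hr <;> rcases ht.lt_or_gt with ht | ht
  · simp [unitSign_of_neg hr, unitSign_of_neg ht, unitSign_of_pos (mul_pos_of_neg_of_neg hr ht)]
  · simp [unitSign_of_neg hr, unitSign_of_pos ht, unitSign_of_neg (mul_neg_of_neg_of_pos hr ht)]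
  · simp [unitSign_of_pos hr, unitSign_of_neg ht, unitSign_of_neg (mul_neg_of_pos_of_neg hr ht)]
  · simp [unitSign_of_pos hr, unitSign_of_pos ht, unitSign_of_pos (mul_pos hr ht)]

lemma unitSign_eq_unitSign_iff {r t : K} (hr : r ≠ 0) (ht : t ≠ 0) :
    unitSign r = unitSign t ↔ 0 < r * t := by
  rw [← unitSign_eq_one_iff, unitSign_mul hr ht, mul_eq_one_iff_eq_inv, Int.units_inv_eq_self]

lemma unitSign_intCast_unit (τ : ℤˣ) : unitSign ((τ : ℤ) : K) = τ := by
  rcases Int.units_eq_one_or τ with rfl | rfl <;> simp [unitSign]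

lemma surjective_unitSign_of_sum_eq_zero [Fintype κ] [Nonempty κ] {w : κ → K}
    (hw : ∀ i, w i ≠ 0) (hsum : ∑ i, w i = 0) : Surjective fun i => unitSign (w i) := by
  obtain ⟨i₀⟩ := ‹Nonempty κ›
  intro τ
  rcases Int.units_eq_one_or τ with rfl | rfl
  · obtain ⟨i, -, hi⟩ := Finset.exists_pos_of_sum_zero_of_exists_nonzero w hsum
      ⟨i₀, Finset.mem_univ _, hw i₀⟩
    exact ⟨i, unitSign_of_pos hi⟩
  · obtain ⟨i, -, hi⟩ := Finset.exists_pos_of_sum_zero_of_exists_nonzero (-w)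
      (by simpa using hsum) ⟨i₀, Finset.mem_univ _, neg_ne_zero.2 (hw i₀)⟩
    exact ⟨i, unitSign_of_neg (neg_pos.1 hi)⟩

lemma exists_sum_eq_zero_of_surjective [Fintype κ] {s : κ → ℤˣ} (hs : Surjective s) :
    ∃ w : κ → K, (∀ i, w i ≠ 0) ∧ ∑ i, w i = 0 ∧ ∀ i, unitSign (w i) = s i := by
  let n (τ : ℤˣ) : ℕ := Finset.card {i | s i = τ}
  have hn (τ : ℤˣ) : 0 < (n τ : K) := by
    obtain ⟨i, hi⟩ := hs τ
    exact Nat.cast_pos.2 (Finset.card_pos.2 ⟨i, by simpa using hi⟩)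
  have hne (i : κ) : ¬s i = 1 ↔ s i = -1 := Int.units_ne_iff_eq_neg
  refine ⟨fun i => if s i = 1 then n (-1) else -n 1, fun i => ?_, ?_, fun i => ?_⟩
  · dsimp only
    split_ifs
    exacts [(hn _).ne', neg_ne_zero.2 (hn _).ne']
  · simp only [Finset.sum_ite, Finset.sum_const, hne, nsmul_eq_mul]
    rw [mul_neg, Nat.cast_comm, add_neg_cancel]
  · dsimp only
    split_ifs with h
    · rw [unitSign_of_pos (hn _), h]
    · rw [unitSign_of_neg (neg_neg_of_pos (hn _)), Int.units_ne_iff_eq_neg.1 h]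

end UnitSign

/-! ### Chambers -/

namespace Arrangement

variable {ℓ : ℕ} {ι : Type} [Fintype ι] (A : Arrangement ℓ ι)

lemma continuous_form (j : ι) : Continuous (A.form j) :=
  (A.form j).continuous_of_finiteDimensional

lemma connectedComponentIn_complement {x : Fin ℓ → ℝ} (hx : x ∈ A.Complement) :
    connectedComponentIn A.Complement x = {y | ∀ j, 0 < A.form j x * A.form j y} := by
  have hcont (j : ι) : Continuous fun y => A.form j x * A.form j y :=
    continuous_const.mul (A.continuous_form j)
  refine Subset.antisymm (fun y hy j => ?_) ?_
  · refine isPreconnected_connectedComponentIn.subset_left_of_subset_union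
      (isOpen_lt continuous_const (hcont j)) (isOpen_lt (hcont j) continuous_const)
      (Set.disjoint_left.2 fun z (hz : 0 < A.form j x * A.form j z) hz' => hz.asymm hz')
      (fun z hz => ?_)
      ⟨x, mem_connectedComponentIn hx, mul_self_pos.2 (hx j)⟩ hy
    exact (mul_ne_zero (hx j) (connectedComponentIn_subset _ _ hz j)).lt_or_gt.symm
  · refine IsPreconnected.subset_connectedComponentIn ?_ (fun j => mul_self_pos.2 (hx j))
      fun y hy j => right_ne_zero_of_mul (hy j).ne'
    rw [ofPred_forall]
    exact (convex_iInter fun j =>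
      convex_halfSpace_gt (A.form j x • A.form j).isLinear 0).isPreconnected

variable {A}

lemma mem_complement_of_mem {C : A.Ch} {x : Fin ℓ → ℝ} (hx : x ∈ C.1) : x ∈ A.Complement := by
  obtain ⟨C, z, hz, rfl⟩ := C
  exact connectedComponentIn_subset _ _ hx

lemma mem_chamber_iff {C : A.Ch} {x y : Fin ℓ → ℝ} (hx : x ∈ C.1) :
    y ∈ C.1 ↔ ∀ j, 0 < A.form j x * A.form j y := by
  have hxA := mem_complement_of_mem hx
  obtain ⟨C, z, hz, rfl⟩ := C
  change y ∈ connectedComponentIn A.Complement z ↔ _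
  rw [connectedComponentIn_eq hx, A.connectedComponentIn_complement hxA, mem_ofPred_eq]

lemma exists_mem_chamber (C : A.Ch) : ∃ x, x ∈ C.1 := by
  obtain ⟨C, x, hx, rfl⟩ := C
  exact ⟨x, mem_connectedComponentIn hx⟩

lemma eps_eq_mul_unitSign {C : A.Ch} {x : Fin ℓ → ℝ} (hx : x ∈ C.1) (j : ι) (σ : ℤˣ) :
    A.eps j σ C = σ * unitSign (A.form j x) := by
  have hiff : (∀ y ∈ C.1, 0 < A.form j y) ↔ 0 < A.form j x :=
    ⟨fun h => h x hx, fun h y hy => (pos_iff_pos_of_mul_pos ((mem_chamber_iff hx).1 hy j)).1 h⟩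
  simp only [eps, unitSign, hiff]

lemma eps_eq_mul_eps_one (C : A.Ch) (j : ι) (σ : ℤˣ) : A.eps j σ C = σ * A.eps j 1 C := by
  simp only [eps, one_mul]

lemma chamber_ext {C D : A.Ch} (h : ∀ j, A.eps j 1 C = A.eps j 1 D) : C = D := by
  obtain ⟨x, hx⟩ := exists_mem_chamber C
  obtain ⟨y, hy⟩ := exists_mem_chamber D
  have hxy (j : ι) : 0 < A.form j x * A.form j y := by
    rw [← unitSign_eq_unitSign_iff (mem_complement_of_mem hx j) (mem_complement_of_mem hy j)]
    simpa only [eps_eq_mul_unitSign hx, eps_eq_mul_unitSign hy, one_mul] using h j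
  have hyC : y ∈ C.1 := (mem_chamber_iff hx).2 hxy
  ext z
  rw [mem_chamber_iff hyC, mem_chamber_iff hy]

variable (A)

lemma dense_complement : Dense A.Complement := by
  have hA : A.Complement = ⋂ j, (LinearMap.ker (A.form j) : Set (Fin ℓ → ℝ))ᶜ := by
    ext x
    simp [Complement]
  rw [hA]
  refine dense_iInter_of_isOpen
    (fun j => (LinearMap.ker (A.form j)).closed_of_finiteDimensional.isOpen_compl) fun j => ?_
  rw [← interior_eq_empty_iff_dense_compl, ← not_nonempty_iff_eq_empty]
  exact fun h => A.form_ne_zero j (LinearMap.ker_eq_top.1 (eq_top_of_nonempty_interior' _ h))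

lemma exists_chamber_eps_eq_unitSign (x : Fin ℓ → ℝ) :
    ∃ C : A.Ch, ∀ j, A.form j x ≠ 0 → A.eps j 1 C = unitSign (A.form j x) := by
  have hopen : IsOpen {y | ∀ j, A.form j x ≠ 0 → 0 < A.form j x * A.form j y} := by
    simp only [ofPred_forall]
    exact isOpen_iInter_of_finite fun j => isOpen_iInter_of_finite fun _ =>
      isOpen_lt continuous_const (continuous_const.mul (A.continuous_form j))
  obtain ⟨y, hy, hyA⟩ := A.dense_complement.inter_open_nonempty _ hopen
    ⟨x, fun j hj => mul_self_pos.2 hj⟩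
  refine ⟨⟨_, y, hyA, rfl⟩, fun j hj => ?_⟩
  rw [eps_eq_mul_unitSign (mem_connectedComponentIn hyA), one_mul, eq_comm,
    unitSign_eq_unitSign_iff hj (hyA j)]
  exact hy j hj

lemma exists_chamber_eps_eq (j : ι) (τ : ℤˣ) : ∃ C : A.Ch, A.eps j 1 C = τ := by
  obtain ⟨x, hx⟩ := LinearMap.surjective (A.form_ne_zero j) ((τ : ℤ) : ℝ)
  obtain ⟨C, hC⟩ := A.exists_chamber_eps_eq_unitSign x
  exact ⟨C, by rw [hC j (by simp [hx]), hx, unitSign_intCast_unit]⟩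

variable {A}

lemma IsAdmissible.exists_voting_rules {m : ℕ} {Φ : (Fin m → A.Ch) → A.Ch}
    (hΦ : A.IsAdmissible m Φ) :
    ∃ g : ι → (Fin m → ℤˣ) → ℤˣ, (∀ j τ, g j (fun _ => τ) = τ) ∧
      ∀ j 𝒞, A.eps j 1 (Φ 𝒞) = g j fun p => A.eps j 1 (𝒞 p) := by
  obtain ⟨φ, hφ_one, hφ⟩ := hΦ
  refine ⟨fun j => φ j 1, fun j τ => ?_, fun j => hφ j 1⟩
  obtain ⟨C, hC⟩ := A.exists_chamber_eps_eq j τ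
  have hτ : τ * A.eps j 1 (Φ fun _ => C) = 1 := by
    simpa only [eps_eq_mul_eps_one _ j τ, hC, Int.units_mul_self, hφ_one] using hφ j τ fun _ => C
  calc φ j 1 (fun _ => τ) = A.eps j 1 (Φ fun _ => C) := by rw [hφ, hC]
    _ = τ := by rw [← Int.units_inv_eq_self τ, eq_inv_iff_mul_eq_one, mul_comm, hτ]

/-! ### Circuits of an arrangement -/

section Circuit

variable {c : ι → ℝ}

lemma exists_mem_support_ne_ne (hc : IsElementaryVector (linearRelations A.form) c)
    (i j : support c) : ∃ k : support c, k ≠ i ∧ k ≠ j := by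
  by_contra! h
  have hsum (x : Fin ℓ → ℝ) : ∑ k ∈ {i.1, j.1}, c k * A.form k x = 0 := by
    have hx := LinearMap.congr_fun (mem_linearRelations.1 hc.1.1) x
    simp only [LinearMap.sum_apply, LinearMap.smul_apply, smul_eq_mul, LinearMap.zero_apply] at hx
    refine (Finset.sum_subset (Finset.subset_univ _) fun k _ hk => ?_).trans hx
    simp only [Finset.mem_insert, Finset.mem_singleton, not_or] at hk
    by_contra hk0
    exact hk.2 (congrArg Subtype.val
      (h ⟨k, left_ne_zero_of_mul hk0⟩ fun e => hk.1 (congrArg Subtype.val e)))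
  by_cases hij : i.1 = j.1
  · refine A.form_ne_zero i (LinearMap.ext fun x => ?_)
    simpa [← hij, mem_support.1 i.2] using hsum x
  · refine hij (A.ker_injective _ _ (Submodule.ext fun x => ?_))
    have hx := hsum x
    rw [Finset.sum_pair hij] at hx
    simp only [LinearMap.mem_ker]
    constructor <;> intro h0 <;> simpa [h0, mem_support.1 i.2, mem_support.1 j.2] using hx

lemma surjective_unitSign_mul_eps (hc : IsElementaryVector (linearRelations A.form) c) (C : A.Ch) :
    Surjective fun i : support c => unitSign (c i) * A.eps i 1 C := by
  obtain ⟨x, hx⟩ := exists_mem_chamber C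
  have hxA := mem_complement_of_mem hx
  have := hc.nonempty_support
  have hsum : ∑ i : support c, c i * A.form i x = 0 := by
    have hrel := LinearMap.congr_fun (mem_linearRelations.1 hc.1.1) x
    simp only [LinearMap.sum_apply, LinearMap.smul_apply, smul_eq_mul, LinearMap.zero_apply] at hrel
    exact (sum_support_mul c fun i => A.form i x).trans hrel
  have hsign (i : support c) : unitSign (c i * A.form i x) = unitSign (c i) * A.eps i 1 C := by
    rw [eps_eq_mul_unitSign hx, one_mul, unitSign_mul i.2 (hxA i)]
  simpa only [hsign] using
    surjective_unitSign_of_sum_eq_zero (fun i : support c => mul_ne_zero i.2 (hxA i)) hsum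

lemma exists_chamber_eps_eq_unitSign_mul (hc : IsElementaryVector (linearRelations A.form) c)
    {s : support c → ℤˣ} (hs : Surjective s) :
    ∃ C : A.Ch, ∀ i : support c, A.eps i 1 C = unitSign (c i) * s i := by
  obtain ⟨w, hw, hsum, hsign⟩ := exists_sum_eq_zero_of_surjective (K := ℝ) hs
  let y (i : ι) : ℝ := if hi : i ∈ support c then w ⟨i, hi⟩ / c i else 0
  have hcy (i : support c) : c i * y i = w i := by
    rw [show y i = w i / c i from dif_pos i.2, mul_div_cancel₀ _ i.2]
  obtain ⟨x, hx⟩ := hc.exists_forall_apply_eq (y := y) (by simpa only [← sum_support_mul, hcy])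
  have hcx (i : support c) : c i * A.form i x = w i := by rw [hx i i.2, hcy]
  have hne (i : support c) : A.form i x ≠ 0 := right_ne_zero_of_mul (hcx i ▸ hw i)
  obtain ⟨C, hC⟩ := A.exists_chamber_eps_eq_unitSign x
  refine ⟨C, fun i => ?_⟩
  rw [hC i (hne i), ← hsign, ← hcx, unitSign_mul i.2 (hne i), ← mul_assoc, Int.units_mul_self,
    one_mul]

lemma isArrovian_of_isElementaryVector (hc : IsElementaryVector (linearRelations A.form) c)
    {N : Type*} {Φ : (N → A.Ch) → A.Ch} {g : ι → (N → ℤˣ) → ℤˣ}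
    (hg_const : ∀ j τ, g j (fun _ => τ) = τ)
    (hg : ∀ j 𝒞, A.eps j 1 (Φ 𝒞) = g j fun p => A.eps j 1 (𝒞 p)) :
    IsArrovian fun (i : support c) (x : N → ℤˣ) =>
      unitSign (c i) * g i fun p => unitSign (c i) * x p where
  map_const i τ := by rw [hg_const, ← mul_assoc, Int.units_mul_self, one_mul]
  surjective X hX := by
    choose 𝒞 h𝒞 using fun p => exists_chamber_eps_eq_unitSign_mul hc (hX p)
    simpa only [hg, h𝒞] using surjective_unitSign_mul_eps hc (Φ 𝒞)

lemma exists_dictator_of_isElementaryVector (hc : IsElementaryVector (linearRelations A.form) c)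
    {N : Type*} [Finite N] {Φ : (N → A.Ch) → A.Ch} {g : ι → (N → ℤˣ) → ℤˣ}
    (hg_const : ∀ j τ, g j (fun _ => τ) = τ)
    (hg : ∀ j 𝒞, A.eps j 1 (Φ 𝒞) = g j fun p => A.eps j 1 (𝒞 p)) :
    ∃ h, ∀ i, c i ≠ 0 → ∀ x, g i x = x h := by
  have := hc.nonempty_support
  obtain ⟨h, hh⟩ := (isArrovian_of_isElementaryVector hc hg_const hg).exists_dictator
    (exists_mem_support_ne_ne hc)
  refine ⟨h, fun i hi x => ?_⟩
  have hx := hh ⟨i, hi⟩ fun p => unitSign (c i) * x p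
  simp only [← mul_assoc, Int.units_mul_self, one_mul] at hx
  exact mul_left_cancel hx

end Circuit

/-! ### Indecomposable arrangements -/

lemma rnkOn_eq_finrank_span (S : Finset ι) :
    A.rnkOn S = Module.finrank ℝ (span ℝ (A.form '' S)) := by
  have hker : ⨅ j ∈ S, LinearMap.ker (A.form j) = (span ℝ (A.form '' S)).dualCoannihilator := by
    rw [SetLike.ext'_iff, coe_dualCoannihilator_span]
    ext x
    simp
  have hdim := Subspace.finrank_add_finrank_dualCoannihilator_eq (span ℝ (A.form '' S))
  rw [Module.finrank_fin_fun] at hdim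
  rw [rnkOn, hker]
  exact Nat.sub_eq_of_eq_add hdim.symm

namespace Indecomposable

lemma not_disjoint_span (hA : A.Indecomposable) {S : Finset ι} (hS : S.Nonempty)
    (hS' : Sᶜ.Nonempty) :
    ¬Disjoint (span ℝ (A.form '' S)) (span ℝ (A.form '' (Sᶜ : Finset ι))) := by
  refine fun hdisj => hA ⟨S, Sᶜ, hS, hS', disjoint_compl_right, Finset.union_compl S, ?_⟩
  have hdim := finrank_sup_add_finrank_inf_eq (span ℝ (A.form '' S))
    (span ℝ (A.form '' (Sᶜ : Finset ι)))
  rw [hdisj.eq_bot, finrank_bot, add_zero, ← span_union, ← image_union, ← Finset.coe_union,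
    Finset.union_compl] at hdim
  simpa only [rnkOn_eq_finrank_span] using hdim

lemma exists_isElementaryVector (hA : A.Indecomposable) {S : Finset ι} (hS : S.Nonempty)
    (hS' : Sᶜ.Nonempty) :
    ∃ c : ι → ℝ, IsElementaryVector (linearRelations A.form) c ∧
      (∃ i ∈ S, c i ≠ 0) ∧ ∃ i ∉ S, c i ≠ 0 :=
  exists_isElementaryVector_of_not_disjoint_span (hA.not_disjoint_span hS hS')

lemma exists_isElementaryVector_apply_ne_zero [Nontrivial ι] (hA : A.Indecomposable) (j : ι) :
    ∃ c : ι → ℝ, IsElementaryVector (linearRelations A.form) c ∧ c j ≠ 0 := by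
  obtain ⟨k, hk⟩ := exists_ne j
  obtain ⟨c, hc, ⟨i, hi, hci⟩, -⟩ :=
    hA.exists_isElementaryVector (Finset.singleton_nonempty j) ⟨k, by simpa using hk⟩
  exact ⟨c, hc, Finset.mem_singleton.1 hi ▸ hci⟩

lemma forall_of_circuit_closed (hA : A.Indecomposable) {P : ι → Prop}
    (hP : ∀ c : ι → ℝ, IsElementaryVector (linearRelations A.form) c →
      ∀ i j, c i ≠ 0 → c j ≠ 0 → P i → P j)
    {i : ι} (hi : P i) (j : ι) : P j := by
  by_contra hj
  obtain ⟨c, hc, ⟨k, hk, hck⟩, k', hk', hck'⟩ := hA.exists_isElementaryVector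
    (S := Finset.univ.filter P) ⟨i, by simpa using hi⟩ ⟨j, by simpa using hj⟩
  simp only [Finset.mem_filter, Finset.mem_univ, true_and] at hk hk'
  exact hk' (hP c hc k k' hck hck' hk)

end Indecomposable

end Arrangement

/-- **Theorem.** If `𝒜` is a nonempty indecomposable real central arrangement with
`|𝒜| ≥ 3`, then every admissible map `Φ : Ch^m → Ch` is projective, i.e. the projection
onto the `h`-th component for some `h`. -/
theorem admissible_is_projective {ℓ : ℕ} {ι : Type} [Fintype ι] [Nonempty ι]
    (A : Arrangement ℓ ι) (hA : A.Indecomposable) (hcard : 3 ≤ Fintype.card ι)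
    (m : ℕ) (hm : 0 < m)
    (Φ : (Fin m → A.Ch) → A.Ch) (hΦ : A.IsAdmissible m Φ) :
    ∃ h : Fin m, Φ = fun 𝒞 => 𝒞 h := by
  obtain ⟨g, hg_const, hg⟩ := hΦ.exists_voting_rules
  have hcirc (c : ι → ℝ) (hc : IsElementaryVector (linearRelations A.form) c) :
      ∃ h, ∀ i, c i ≠ 0 → ∀ x, g i x = x h :=
    Arrangement.exists_dictator_of_isElementaryVector hc hg_const hg
  obtain ⟨j₀⟩ := ‹Nonempty ι›
  have : Nontrivial ι := Fintype.one_lt_card_iff_nontrivial.1 (by omega)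
  obtain ⟨c₀, hc₀, hj₀⟩ := hA.exists_isElementaryVector_apply_ne_zero j₀
  obtain ⟨h, hh⟩ := hcirc c₀ hc₀
  have hall : ∀ j x, g j x = x h := by
    refine hA.forall_of_circuit_closed (fun c hc i j hi hj hgi x => ?_) (hh j₀ hj₀)
    obtain ⟨h', hh'⟩ := hcirc c hc
    rw [hh' j hj, ← hh' i hi x, hgi]
  exact ⟨h, funext fun 𝒞 => Arrangement.chamber_ext fun j => by rw [hg, hall]⟩
end
end

section
/- Let ℓ ≥ 2 and let 𝒜 be the braid arrangement in ℝ^ℓ, i.e., 𝒜 = {H_{ij} : 1 ≤ i < j ≤ ℓ} where H_{ij} = ker(x_i − x_j). Then 𝒜 is indecomposable. -/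
/-!
Let `V` and `W` be the intersections of the hyperplanes of the two parts of a decomposition.
Additivity of the rank means, by the dimension formula, that `V + W` is the whole space.
Agreement of coordinates on `V`, and on `W`, gives two equivalence relations on the index set.
They meet in equality, since only equal coordinates agree on `V + W`; and any two indices are
related by one of them, since `H_{ij}` belongs to one of the parts. Two equivalence relations
covering all pairs cannot both be proper, so one of them is everything and the other is equality,
although each part contains some `H_{ij}`.
-/

noncomputable section
attribute [local instance] Classical.propDecidable

section EquivalenceRelations

variable {α : Type*} {r s : Setoid α}

theorem setoid_eq_top_or_eq_top_of_forall_or (h : ∀ a b, r a b ∨ s a b) : r = ⊤ ∨ s = ⊤ := by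
  refine or_iff_not_imp_left.2 fun hr => ?_
  obtain ⟨a, b, hab⟩ : ∃ a b, ¬ r a b := by
    simpa only [Setoid.eq_top_iff, not_forall] using hr
  have hsab : s a b := (h a b).resolve_left hab
  have hsa (c : α) : s a c := by
    by_contra hac
    have hbc : ¬ s b c := fun hbc => hac (s.trans hsab hbc)
    have hrac : r a c := (h a c).resolve_right hac
    have hrbc : r b c := (h b c).resolve_right hbc
    exact hab (r.trans hrac (r.symm hrbc))
  exact Setoid.eq_top_iff.2 fun c d => s.trans (s.symm (hsa c)) (hsa d)

theorem setoid_eq_bot_or_eq_bot_of_inf_eq_bot (hinf : r ⊓ s = ⊥) (h : ∀ a b, r a b ∨ s a b) :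
    r = ⊥ ∨ s = ⊥ := by
  rcases setoid_eq_top_or_eq_top_of_forall_or h with rfl | rfl
  · exact .inr (by rwa [top_inf_eq] at hinf)
  · exact .inl (by rwa [inf_top_eq] at hinf)

end EquivalenceRelations

section CoordinateAgreement

variable {κ R M : Type*} [Semiring R] [AddCommMonoid M] [Module R M]

/-- Agreement of coordinates on `V`: the indices `i` and `j` are related when `x i = x j` for all
`x ∈ V`. It records which hyperplanes `x i = x j` contain `V`. -/
def coordSetoid (V : Submodule R (κ → M)) : Setoid κ where
  r i j := ∀ x ∈ V, x i = x j
  iseqv :=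
    { refl := fun _ _ _ => rfl
      symm := fun h x hx => (h x hx).symm
      trans := fun h h' x hx => (h x hx).trans (h' x hx) }

theorem coordSetoid_apply {V : Submodule R (κ → M)} {i j : κ} :
    coordSetoid V i j ↔ ∀ x ∈ V, x i = x j :=
  Iff.rfl

theorem coordSetoid_sup (V W : Submodule R (κ → M)) :
    coordSetoid (V ⊔ W) = coordSetoid V ⊓ coordSetoid W := by
  ext i j
  simp only [Setoid.inf_iff_and, coordSetoid_apply]
  refine ⟨fun h => ⟨fun x hx => h x (Submodule.mem_sup_left hx),
    fun x hx => h x (Submodule.mem_sup_right hx)⟩, fun ⟨hV, hW⟩ x hx => ?_⟩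
  obtain ⟨v, hv, w, hw, rfl⟩ := Submodule.mem_sup.1 hx
  rw [Pi.add_apply, Pi.add_apply, hV v hv, hW w hw]

theorem coordSetoid_top [Nontrivial M] : coordSetoid (⊤ : Submodule R (κ → M)) = ⊥ := by
  obtain ⟨m, hm⟩ := exists_ne (0 : M)
  refine eq_bot_iff.2 fun i j hij => ?_
  by_contra hne
  have hsingle := hij (Pi.single i m) Submodule.mem_top
  rw [Pi.single_eq_same, Pi.single_eq_of_ne (Ne.symm hne)] at hsingle
  exact hm hsingle

end CoordinateAgreement

namespace Arrangement

variable {ℓ : ℕ} {ι : Type} [Fintype ι] (A : Arrangement ℓ ι)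

/-- The intersection of the hyperplanes indexed by `S`, whose codimension is `A.rnkOn S`; it is the
whole space when `S` is empty. -/
def flat (S : Finset ι) : Submodule ℝ (Fin ℓ → ℝ) :=
  ⨅ j ∈ S, LinearMap.ker (A.form j)

theorem flat_le_ker {S : Finset ι} {j : ι} (hj : j ∈ S) : A.flat S ≤ LinearMap.ker (A.form j) :=
  iInf₂_le j hj

theorem flat_union (S T : Finset ι) : A.flat (S ∪ T) = A.flat S ⊓ A.flat T :=
  Finset.iInf_union

theorem rnkOn_add_finrank_flat (S : Finset ι) :
    A.rnkOn S + Module.finrank ℝ (A.flat S) = ℓ :=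
  Nat.sub_add_cancel <| (Submodule.finrank_le (A.flat S)).trans_eq (Module.finrank_fin_fun ℝ)

theorem flat_sup_flat_eq_top_of_rnkOn_union {S T : Finset ι}
    (h : A.rnkOn (S ∪ T) = A.rnkOn S + A.rnkOn T) : A.flat S ⊔ A.flat T = ⊤ := by
  apply Submodule.eq_top_of_finrank_eq
  have hdim := Submodule.finrank_sup_add_finrank_inf_eq (A.flat S) (A.flat T)
  have hS := A.rnkOn_add_finrank_flat S
  have hT := A.rnkOn_add_finrank_flat T
  have hST := A.rnkOn_add_finrank_flat (S ∪ T)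
  rw [flat_union] at hST
  rw [Module.finrank_fin_fun]
  omega

theorem coordSetoid_flat_of_mem {S : Finset ι} {p : ι} {i j : Fin ℓ}
    (hform : A.form p =
      LinearMap.proj (R := ℝ) (φ := fun _ : Fin ℓ => ℝ) i - LinearMap.proj j) (hp : p ∈ S) :
    coordSetoid (A.flat S) i j := fun x hx => by
  have hker : A.form p x = 0 := A.flat_le_ker hp hx
  rwa [hform, LinearMap.sub_apply, LinearMap.proj_apply, LinearMap.proj_apply, sub_eq_zero] at hker

theorem coordSetoid_flat_or_of_mem_union {S T : Finset ι} {p : ι} {i j : Fin ℓ}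
    (hform : A.form p =
      LinearMap.proj (R := ℝ) (φ := fun _ : Fin ℓ => ℝ) i - LinearMap.proj j) (hp : p ∈ S ∪ T) :
    coordSetoid (A.flat S) i j ∨ coordSetoid (A.flat T) i j :=
  (Finset.mem_union.1 hp).imp (A.coordSetoid_flat_of_mem hform) (A.coordSetoid_flat_of_mem hform)

end Arrangement

/-- **Example.** The braid arrangement `𝒜 = {ker (x_i − x_j) : 1 ≤ i < j ≤ ℓ}` in `ℝ^ℓ`,
`ℓ ≥ 2`, is indecomposable. -/
theorem braid_indecomposable (ℓ : ℕ) (hℓ : 2 ≤ ℓ)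
    (A : Arrangement ℓ {p : Fin ℓ × Fin ℓ // p.1 < p.2})
    (hA : ∀ p, A.form p =
      (LinearMap.proj (R := ℝ) (φ := fun _ : Fin ℓ => ℝ) p.1.1) -
      (LinearMap.proj (R := ℝ) (φ := fun _ : Fin ℓ => ℝ) p.1.2)) :
    A.Indecomposable := by
  rintro ⟨S, T, ⟨p, hp⟩, ⟨q, hq⟩, -, hST, hrnk⟩
  have hsup : A.flat S ⊔ A.flat T = ⊤ := A.flat_sup_flat_eq_top_of_rnkOn_union (hST ▸ hrnk)
  have hinf : coordSetoid (A.flat S) ⊓ coordSetoid (A.flat T) = ⊥ := by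
    rw [← coordSetoid_sup, hsup, coordSetoid_top]
  have hlt (i j : Fin ℓ) (hij : i < j) :
      coordSetoid (A.flat S) i j ∨ coordSetoid (A.flat T) i j :=
    A.coordSetoid_flat_or_of_mem_union (hA ⟨(i, j), hij⟩) (hST.ge (Finset.mem_univ _))
  have hcover (i j : Fin ℓ) : coordSetoid (A.flat S) i j ∨ coordSetoid (A.flat T) i j := by
    rcases lt_trichotomy i j with hij | rfl | hji
    · exact hlt i j hij
    · exact .inl (Setoid.refl' _ i)
    · exact (hlt j i hji).imp (Setoid.symm' _) (Setoid.symm' _)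
  rcases setoid_eq_bot_or_eq_bot_of_inf_eq_bot hinf hcover with hbot | hbot
  · exact p.2.ne (hbot.le (A.coordSetoid_flat_of_mem (hA p) hp))
  · exact q.2.ne (hbot.le (A.coordSetoid_flat_of_mem (hA q) hq))
end
end
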